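/- Let u be a distribution on R^n and let ρ be a test function with integral 1, and ρ_ε(x) = ε^{-n} ρ(x/ε). Then u = 0 in D'(R^n) if and only if for every net (x_ε)_{ε∈(0,1]} of points contained in a fixed compact subset of R^n, the regularizations satisfy (u * ρ_ε)(x_ε) → 0 as ε → 0. -/

import Mathlib

open Filter MeasureTheory

/-- A test function on `ℝⁿ`: smooth with compact support. -/
def IsTestFunction {n : ℕ} (φ : (Fin n → ℝ) → ℝ) : Prop :=
  ContDiff ℝ (⊤ : ℕ∞) φ ∧ HasCompactSupport φ

lemma conv_iteratedFDeriv {n : ℕ} (f h : (Fin n → ℝ) → ℝ) (hf : IsTestFunction f)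
    (hh : IsTestFunction h) (m : ℕ) (y : Fin n → ℝ) :
    iteratedFDeriv ℝ m (fun y => ∫ x, f x * h (y - x)) y
      = ∫ x, f x • iteratedFDeriv ℝ m h (y - x) := by
  induction m generalizing y with
  | zero =>
    rw [iteratedFDeriv_zero_eq_comp, iteratedFDeriv_zero_eq_comp]
    simp only [Function.comp_apply]
    have := (continuousMultilinearCurryFin0 ℝ (Fin n → ℝ) ℝ).symm.toContinuousLinearEquiv.integral_comp_comm
      (μ := volume) (fun x => f x * h (y - x))
    exact this.symm
  | succ m ih =>
    have hsm : ContDiff ℝ 1 (iteratedFDeriv ℝ m h) :=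
      hh.1.iteratedFDeriv_right (i := m) (m := 1) (by exact_mod_cast le_top)
    have hcs : HasCompactSupport (iteratedFDeriv ℝ m h) := hh.2.iteratedFDeriv m
    have hfi : LocallyIntegrable f volume := hf.1.continuous.locallyIntegrable
    have key := hcs.hasFDerivAt_convolution_right
      (ContinuousLinearMap.lsmul ℝ ℝ : ℝ →L[ℝ] _ →L[ℝ] _) hfi hsm y
    have hfun : iteratedFDeriv ℝ m (fun y => ∫ x, f x * h (y - x))
        = convolution f (iteratedFDeriv ℝ m h) (ContinuousLinearMap.lsmul ℝ ℝ) volume := by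
      ext1 z
      rw [ih z, convolution_lsmul]
    rw [iteratedFDeriv_succ_eq_comp_left, iteratedFDeriv_succ_eq_comp_left]
    simp only [Function.comp_apply]
    rw [hfun, key.fderiv]
    have := ContinuousLinearEquiv.integral_comp_comm (𝕜 := ℝ)
      (E := (Fin n → ℝ) →L[ℝ] ContinuousMultilinearMap ℝ (fun _ : Fin m => Fin n → ℝ) ℝ)
      (F := ContinuousMultilinearMap ℝ (fun _ : Fin (m + 1) => Fin n → ℝ) ℝ)
      (continuousMultilinearCurryLeftEquiv ℝ (fun _ : Fin (m + 1) => Fin n → ℝ) ℝ).symm.toContinuousLinearEquiv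
      (μ := volume) (fun x => f x • fderiv ℝ (iteratedFDeriv ℝ m h) (y - x))
    refine Eq.trans ?_ (Eq.trans this.symm ?_)
    · rfl
    · congr 1

lemma exists_partition {n : ℕ} (K : Set (Fin n → ℝ)) (hK : IsCompact K) (r : ℝ) (hr : 0 < r) :
    ∃ (N : ℕ) (x : Fin N → Fin n → ℝ) (A : Fin N → Set (Fin n → ℝ)),
      (∀ i, MeasurableSet (A i)) ∧ Pairwise (Function.onFun Disjoint A) ∧ (⋃ i, A i) = K ∧
      (∀ i, x i ∈ K) ∧ ∀ i, ∀ z ∈ A i, dist z (x i) < r := by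
  obtain ⟨t, htK, htf, hcov⟩ := hK.finite_cover_balls hr
  have := htf.to_subtype
  obtain ⟨N, ⟨e⟩⟩ := Finite.exists_equiv_fin t
  let B : Fin N → Set (Fin n → ℝ) := fun i => Metric.ball (e.symm i : Fin n → ℝ) r
  refine ⟨N, fun i => e.symm i, fun i => K ∩ disjointed B i, ?_, ?_, ?_, ?_, ?_⟩
  · intro i
    refine hK.measurableSet.inter ?_
    refine disjointedRec (fun {t i} h => ?_) measurableSet_ball
    exact h.diff measurableSet_ball
  · intro i j hij
    exact (disjoint_disjointed B hij).mono Set.inter_subset_right Set.inter_subset_right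
  · rw [← Set.inter_iUnion, iUnion_disjointed, Set.inter_eq_left]
    intro z hz
    obtain ⟨c, hc, hzc⟩ := Set.mem_iUnion₂.1 (hcov hz)
    refine Set.mem_iUnion.2 ⟨e ⟨c, hc⟩, ?_⟩
    simpa [B] using hzc
  · intro i
    exact htK (e.symm i).2
  · intro i z hz
    exact disjointed_subset B i hz.2

lemma riemann_bound {n : ℕ} {F : Type*} [NormedAddCommGroup F] [NormedSpace ℝ F] [CompleteSpace F]
    (φ : (Fin n → ℝ) → ℝ) (hφ : IsTestFunction φ) (Ψ : (Fin n → ℝ) → F) (hΨ : Continuous Ψ)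
    (r δ : ℝ) (hδ : ∀ a b, dist a b < r → ‖Ψ a - Ψ b‖ ≤ δ)
    (N : ℕ) (x : Fin N → Fin n → ℝ) (A : Fin N → Set (Fin n → ℝ))
    (hA : ∀ i, MeasurableSet (A i)) (hd : Pairwise (Function.onFun Disjoint A))
    (hU : (⋃ i, A i) = tsupport φ) (hr : ∀ i, ∀ z ∈ A i, dist z (x i) < r) (y : Fin n → ℝ) :
    ‖∑ i, (∫ z in A i, φ z) • Ψ (y - x i) - ∫ z, φ z • Ψ (y - z)‖ ≤ δ * ∫ z, ‖φ z‖ := by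
  have hφi : Integrable φ := hφ.1.continuous.integrable_of_hasCompactSupport hφ.2
  have hi : Integrable (fun z => φ z • Ψ (y - z)) := by
    refine Continuous.integrable_of_hasCompactSupport ?_ ?_
    · exact hφ.1.continuous.smul (hΨ.comp (by fun_prop))
    · exact hφ.2.smul_right
  have e1 : ∫ z, φ z • Ψ (y - z) = ∑ i, ∫ z in A i, φ z • Ψ (y - z) := by
    rw [← integral_iUnion_fintype hA hd (fun i => hi.integrableOn), hU]
    refine (setIntegral_eq_integral_of_forall_compl_eq_zero ?_).symm
    intro z hz
    rw [image_eq_zero_of_notMem_tsupport hz, zero_smul]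
  have e2 : ∫ z, ‖φ z‖ = ∑ i, ∫ z in A i, ‖φ z‖ := by
    rw [← integral_iUnion_fintype hA hd (fun i => hφi.norm.integrableOn), hU]
    refine (setIntegral_eq_integral_of_forall_compl_eq_zero ?_).symm
    intro z hz
    rw [image_eq_zero_of_notMem_tsupport hz, norm_zero]
  rw [e1, e2, ← Finset.sum_sub_distrib, Finset.mul_sum]
  refine (norm_sum_le _ _).trans (Finset.sum_le_sum fun i _ => ?_)
  rw [← integral_smul_const, ← integral_sub (hφi.integrableOn.smul_const _) hi.integrableOn,
    ← integral_const_mul]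
  refine norm_integral_le_of_norm_le (hφi.norm.integrableOn.const_mul δ) ?_
  refine (ae_restrict_iff' (hA i)).2 (Eventually.of_forall fun z hz => ?_)
  rw [← smul_sub, norm_smul, mul_comm]
  refine mul_le_mul_of_nonneg_right (hδ _ _ ?_) (norm_nonneg _)
  rw [dist_sub_left]
  rw [dist_comm]
  exact hr i z hz

/-- reflected scaled mollifier -/
noncomputable def gg {n : ℕ} (ρ : (Fin n → ℝ) → ℝ) (ε : ℝ) (t : Fin n → ℝ) : ℝ :=
  (ε ^ n)⁻¹ * ρ (ε⁻¹ • (-t))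

lemma gg_test {n : ℕ} {ρ : (Fin n → ℝ) → ℝ} (hρ : IsTestFunction ρ) {ε : ℝ} (hε : 0 < ε) :
    IsTestFunction (gg ρ ε) := by
  refine ⟨?_, ?_⟩
  · exact contDiff_const.mul (hρ.1.comp (contDiff_neg.const_smul _))
  · have h1 : HasCompactSupport (fun t => ρ (ε⁻¹ • (-t))) := by
      refine hρ.2.comp_homeomorph
        ((Homeomorph.neg (Fin n → ℝ)).trans (Homeomorph.smulOfNeZero ε⁻¹ (inv_pos.2 hε).ne'))
    exact h1.mul_left (f := fun _ => (ε ^ n)⁻¹)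

lemma gg_integral {n : ℕ} (f : (Fin n → ℝ) → ℝ) {ε : ℝ} (hε : 0 < ε) :
    ∫ t, gg f ε t = ∫ t, f t := by
  unfold gg
  rw [integral_const_mul, integral_neg_eq_self (fun t => f (ε⁻¹ • t)),
    Measure.integral_comp_inv_smul]
  have : 0 < ε ^ n := by positivity
  simp only [Module.finrank_fintype_fun_eq_card, Fintype.card_fin, smul_eq_mul, abs_of_pos this]
  field_simp

lemma gg_norm {n : ℕ} (f : (Fin n → ℝ) → ℝ) {ε : ℝ} (hε : 0 < ε) :
    ∫ t, ‖gg f ε t‖ = ∫ t, ‖f t‖ := by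
  rw [← gg_integral (fun t => ‖f t‖) hε]
  congr 1
  ext t
  have : 0 < ε ^ n := by positivity
  simp only [gg, norm_mul, norm_inv, Real.norm_eq_abs (ε ^ n), abs_of_pos this]

lemma gg_zero {n : ℕ} {ρ : (Fin n → ℝ) → ℝ} {R : ℝ} (hR : ∀ x, R < ‖x‖ → ρ x = 0)
    {ε : ℝ} (hε : 0 < ε) {t : Fin n → ℝ} (ht : ε * R < ‖t‖) : gg ρ ε t = 0 := by
  unfold gg
  rw [hR, mul_zero]
  rw [norm_smul, norm_neg, norm_inv, Real.norm_of_nonneg hε.le, lt_inv_mul_iff₀ hε]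
  exact ht

lemma mollify_bound {n : ℕ} {F : Type*} [NormedAddCommGroup F] [NormedSpace ℝ F] [CompleteSpace F]
    {ρ : (Fin n → ℝ) → ℝ} (hρ : IsTestFunction ρ) (hρ1 : ∫ x, ρ x = 1) {R : ℝ}
    (hR : ∀ x, R < ‖x‖ → ρ x = 0)
    (Ψ : (Fin n → ℝ) → F) (hΨ : Continuous Ψ)
    (r δ : ℝ) (hδ : ∀ a b, dist a b < r → ‖Ψ a - Ψ b‖ ≤ δ)
    {ε : ℝ} (hε : 0 < ε) (hεr : ε * R < r) (y : Fin n → ℝ) :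
    ‖(∫ z, gg ρ ε z • Ψ (y - z)) - Ψ y‖ ≤ δ * ∫ z, ‖ρ z‖ := by
  have ht := gg_test hρ hε
  have hgi : Integrable (gg ρ ε) := ht.1.continuous.integrable_of_hasCompactSupport ht.2
  have hi : Integrable (fun z => gg ρ ε z • Ψ (y - z)) := by
    refine Continuous.integrable_of_hasCompactSupport ?_ ?_
    · exact ht.1.continuous.smul (hΨ.comp (by fun_prop))
    · exact ht.2.smul_right
  have e : Ψ y = ∫ z, gg ρ ε z • Ψ y := by
    rw [integral_smul_const, gg_integral ρ hε, hρ1, one_smul]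
  rw [← gg_norm ρ hε]
  rw [show (∫ z, gg ρ ε z • Ψ (y - z)) - Ψ y
    = (∫ z, gg ρ ε z • Ψ (y - z)) - ∫ z, gg ρ ε z • Ψ y by rw [← e]]
  rw [← integral_sub hi (hgi.smul_const _), ← integral_const_mul]
  refine norm_integral_le_of_norm_le (hgi.norm.const_mul δ) (Eventually.of_forall fun z => ?_)
  rw [← smul_sub, norm_smul, mul_comm]
  by_cases hz : ε * R < ‖z‖
  · rw [gg_zero hR hε hz]; simp
  · refine mul_le_mul_of_nonneg_right (hδ _ _ ?_) (norm_nonneg _)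
    simp only [dist_eq_norm, sub_sub_cancel_left, norm_neg]
    exact (not_lt.1 hz).trans_lt hεr

lemma modulus {n : ℕ} {h : (Fin n → ℝ) → ℝ} (hh : IsTestFunction h) (m : ℕ) {δ : ℝ} (hδ : 0 < δ) :
    ∃ r > 0, ∀ a b, dist a b < r →
      ‖iteratedFDeriv ℝ m h a - iteratedFDeriv ℝ m h b‖ ≤ δ := by
  have huc : UniformContinuous (iteratedFDeriv ℝ m h) :=
    (hh.2.iteratedFDeriv m).uniformContinuous_of_continuous
      (hh.1.continuous_iteratedFDeriv (by exact_mod_cast le_top))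
  obtain ⟨r, hr, H⟩ := Metric.uniformContinuous_iff.1 huc δ hδ
  refine ⟨r, hr, fun a b hab => ?_⟩
  rw [← dist_eq_norm]
  exact (H hab).le

lemma modulus_all {n : ℕ} {h : (Fin n → ℝ) → ℝ} (hh : IsTestFunction h) (M : ℕ) {δ : ℝ}
    (hδ : 0 < δ) :
    ∃ r > 0, ∀ m < M, ∀ a b, dist a b < r →
      ‖iteratedFDeriv ℝ m h a - iteratedFDeriv ℝ m h b‖ ≤ δ := by
  induction M with
  | zero => exact ⟨1, one_pos, fun m hm => absurd hm (by omega)⟩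
  | succ M ih =>
    obtain ⟨r, hr, H⟩ := ih
    obtain ⟨r', hr', H'⟩ := modulus hh M hδ
    refine ⟨min r r', lt_min hr hr', fun m hm a b hab => ?_⟩
    rcases Nat.lt_succ_iff_lt_or_eq.1 hm with h1 | rfl
    · exact H m h1 a b (hab.trans_le (min_le_left _ _))
    · exact H' a b (hab.trans_le (min_le_right _ _))

/-- One Riemann-sum approximation step. -/
lemma step {n : ℕ} {φ h : (Fin n → ℝ) → ℝ} (hφ : IsTestFunction φ) (hh : IsTestFunction h)
    (M : ℕ) {η : ℝ} (hη : 0 < η) :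
    ∃ (N : ℕ) (x : Fin N → Fin n → ℝ) (c : Fin N → ℝ), (∀ i, x i ∈ tsupport φ) ∧
      (∑ i, |c i| ≤ ∫ z, ‖φ z‖) ∧
      ∀ m < M, ∀ y, ‖iteratedFDeriv ℝ m (fun y => ∑ i, c i * h (y - x i)) y
        - ∫ z, φ z • iteratedFDeriv ℝ m h (y - z)‖ ≤ η * ∫ z, ‖φ z‖ := by
  obtain ⟨r, hr, H⟩ := modulus_all hh M hη
  obtain ⟨N, x, A, hA, hd, hU, hx, hxr⟩ := exists_partition _ hφ.2 r hr
  refine ⟨N, x, fun i => ∫ z in A i, φ z, hx, ?_, ?_⟩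
  · have hφi : Integrable φ := hφ.1.continuous.integrable_of_hasCompactSupport hφ.2
    have e2 : ∫ z, ‖φ z‖ = ∑ i, ∫ z in A i, ‖φ z‖ := by
      rw [← integral_iUnion_fintype hA hd (fun i => hφi.norm.integrableOn), hU]
      refine (setIntegral_eq_integral_of_forall_compl_eq_zero ?_).symm
      intro z hz
      rw [image_eq_zero_of_notMem_tsupport hz, norm_zero]
    rw [e2]
    exact Finset.sum_le_sum fun i _ => norm_integral_le_integral_norm (μ := volume.restrict (A i)) φ
  · intro m hm y
    have hc : ∀ i, ContDiff ℝ m (fun y => h (y - x i)) := fun i =>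
      (hh.1.of_le (by exact_mod_cast le_top)).comp (contDiff_id.sub contDiff_const)
    have e : iteratedFDeriv ℝ m (fun y => ∑ i, (∫ z in A i, φ z) * h (y - x i)) y
        = ∑ i, (∫ z in A i, φ z) • iteratedFDeriv ℝ m h (y - x i) := by
      rw [iteratedFDeriv_sum (fun i _ => contDiff_const.mul (hc i)), Finset.sum_apply]
      refine Finset.sum_congr rfl fun i _ => ?_
      rw [← iteratedFDeriv_comp_sub (𝕜 := ℝ) (f := h) m (x i) y]
      exact iteratedFDeriv_const_smul_apply (𝕜 := ℝ) (a := ∫ z in A i, φ z)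
        (f := fun y => h (y - x i)) (x := y) (hc i).contDiffAt
    rw [e]
    exact riemann_bound φ hφ _ (hh.1.continuous_iteratedFDeriv (by exact_mod_cast le_top)) r η
      (H m hm) N x A hA hd hU hxr y

lemma conv_swap {n : ℕ} {φ h : (Fin n → ℝ) → ℝ} (hφ : IsTestFunction φ) (hh : IsTestFunction h)
    (m : ℕ) (y : Fin n → ℝ) :
    ∫ z, φ z • iteratedFDeriv ℝ m h (y - z) = ∫ z, h z • iteratedFDeriv ℝ m φ (y - z) := by
  rw [← conv_iteratedFDeriv φ h hφ hh, ← conv_iteratedFDeriv h φ hh hφ]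
  congr 1
  ext y
  rw [← integral_sub_left_eq_self _ _ y]
  congr 1
  ext z
  rw [sub_sub_cancel, mul_comm]

lemma translate_test {n : ℕ} {h : (Fin n → ℝ) → ℝ} (hh : IsTestFunction h) (a : Fin n → ℝ) :
    IsTestFunction (fun y => h (y - a)) :=
  ⟨hh.1.comp (contDiff_id.sub contDiff_const), hh.2.comp_homeomorph (Homeomorph.subRight a)⟩

lemma kernel_eq {n : ℕ} (ρ : (Fin n → ℝ) → ℝ) (ε : ℝ) (x : Fin n → ℝ) :
    (fun y => (ε ^ n)⁻¹ * ρ (ε⁻¹ • (x - y))) = fun y => gg ρ ε (y - x) := by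
  ext y
  simp [gg]

/-- Let `u` be a distribution on `ℝⁿ` (a linear functional, sequentially
continuous on test functions with supports in a common compact set) and `ρ` a
mollifier with `∫ ρ = 1`, `ρ_ε(x) = ε^{-n} ρ(x/ε)`. Then `u = 0` in `𝒟'(ℝⁿ)`
iff for every net `(x_ε)` contained in a fixed compact set,
`(u * ρ_ε)(x_ε) = u(y ↦ ρ_ε(x_ε - y)) → 0` as `ε → 0⁺`. -/
theorem distribution_zero_iff_regularizations_vanish_on_compact_nets
    (n : ℕ) (u : ((Fin n → ℝ) → ℝ) →ₗ[ℝ] ℝ)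
    (hcont : ∀ (φ : ℕ → (Fin n → ℝ) → ℝ) (K : Set (Fin n → ℝ)), IsCompact K →
      (∀ k, IsTestFunction (φ k) ∧ tsupport (φ k) ⊆ K) →
      (∀ m : ℕ, TendstoUniformly (fun k => iteratedFDeriv ℝ m (φ k)) 0 atTop) →
      Tendsto (fun k => u (φ k)) atTop (nhds 0))
    (ρ : (Fin n → ℝ) → ℝ) (hρ : IsTestFunction ρ) (hρ1 : ∫ x, ρ x = 1) :
    (∀ φ : (Fin n → ℝ) → ℝ, IsTestFunction φ → u φ = 0) ↔
      (∀ (x : ℝ → (Fin n → ℝ)) (K : Set (Fin n → ℝ)), IsCompact K →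
        (∀ ε : ℝ, 0 < ε → ε ≤ 1 → x ε ∈ K) →
        Tendsto (fun ε : ℝ => u (fun y => (ε ^ n)⁻¹ * ρ (ε⁻¹ • (x ε - y))))
          (nhdsWithin 0 (Set.Ioi 0)) (nhds 0)) := by
  constructor
  · intro h0 x K _ _
    refine tendsto_const_nhds.congr' ?_
    filter_upwards [self_mem_nhdsWithin] with ε hε
    rw [kernel_eq, h0 _ (translate_test (gg_test hρ hε) _)]
  · intro H φ hφ
    -- uniform vanishing on the support of `φ`
    have unif : ∀ δ > 0, ∀ᶠ ε in nhdsWithin (0 : ℝ) (Set.Ioi 0), ∀ a ∈ tsupport φ,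
        |u (fun y => gg ρ ε (y - a))| < δ := by
      intro δ hδ
      rcases (tsupport φ).eq_empty_or_nonempty with he | ⟨a0, ha0⟩
      · simp [he]
      classical
      let P : ℝ → (Fin n → ℝ) → Prop := fun ε a =>
        a ∈ tsupport φ ∧ δ ≤ |u (fun y => gg ρ ε (y - a))|
      let x : ℝ → Fin n → ℝ := fun ε => if h : ∃ a, P ε a then h.choose else a0
      have hx : ∀ ε, x ε ∈ tsupport φ := by
        intro ε
        by_cases h : ∃ a, P ε a
        · simp only [x, dif_pos h]; exact h.choose_spec.1
        · simp only [x, dif_neg h]; exact ha0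
      have T := H x (tsupport φ) hφ.2 (fun ε _ _ => hx ε)
      simp only [kernel_eq] at T
      filter_upwards [(Metric.tendsto_nhds.1 T) δ hδ] with ε hε a ha
      by_contra hcon
      have h : ∃ a, P ε a := ⟨a, ha, not_lt.1 hcon⟩
      have h2 := h.choose_spec.2
      rw [dist_zero_right, Real.norm_eq_abs] at hε
      simp only [x, dif_pos h] at hε
      exact absurd hε (not_lt.2 h2)
    -- the radius of the support of `ρ`
    obtain ⟨R0, hR0⟩ := hρ.2.isBounded.subset_closedBall (0 : Fin n → ℝ)
    let R : ℝ := max R0 1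
    have hRpos : 0 < R := lt_max_of_lt_right one_pos
    have hR : ∀ x, R < ‖x‖ → ρ x = 0 := by
      intro x hx
      refine image_eq_zero_of_notMem_tsupport fun hmem => ?_
      have := hR0 hmem
      rw [mem_closedBall_zero_iff] at this
      exact absurd hx (not_lt.2 (this.trans (le_max_left _ _)))
    let e : ℕ → ℝ := fun k => 1 / ((k : ℝ) + 1)
    have epos : ∀ k, 0 < e k := fun k => Nat.one_div_pos_of_nat
    have ele : ∀ k, e k ≤ 1 := fun k => by
      simp only [e]
      rw [div_le_one (by positivity)]
      have : (0 : ℝ) ≤ k := Nat.cast_nonneg k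
      linarith
    have elim : Tendsto e atTop (nhds 0) := tendsto_one_div_add_atTop_nhds_zero_nat
    have elim' : Tendsto e atTop (nhdsWithin 0 (Set.Ioi 0)) :=
      tendsto_nhdsWithin_iff.2 ⟨elim, Eventually.of_forall epos⟩
    choose N x c hx hc hD using fun k => step hφ (gg_test hρ (epos k)) k (epos k)
    let S : ℕ → (Fin n → ℝ) → ℝ := fun k y => ∑ i, c k i * gg ρ (e k) (y - x k i)
    have hSsm : ∀ k, ContDiff ℝ (⊤ : ℕ∞) (S k) := fun k =>
      ContDiff.sum fun i _ => contDiff_const.mul (translate_test (gg_test hρ (epos k)) _).1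
    let C : ℝ := ∫ z, ‖φ z‖
    have hC : 0 ≤ C := integral_nonneg fun _ => norm_nonneg _
    let K : Set (Fin n → ℝ) := Metric.cthickening R (tsupport φ)
    have hK : IsCompact K := IsCompact.cthickening hφ.2
    have hsupp : ∀ k, tsupport (S k - φ) ⊆ K := by
      intro k
      refine closure_minimal ?_ hK.isClosed
      intro y hy
      by_contra hyK
      apply hy
      have h1 : φ y = 0 := image_eq_zero_of_notMem_tsupport fun hm =>
        hyK (Metric.self_subset_cthickening _ hm)
      have h2 : S k y = 0 := by
        refine Finset.sum_eq_zero fun i _ => ?_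
        rw [gg_zero hR (epos k), mul_zero]
        by_contra hlt
        refine hyK (Metric.mem_cthickening_of_dist_le y (x k i) R _ (hx k i) ?_)
        rw [dist_eq_norm]
        refine (not_lt.1 hlt).trans ?_
        have := ele k
        nlinarith
      simp [h1, h2]
    have htest : ∀ k, IsTestFunction (S k - φ) := fun k =>
      ⟨(hSsm k).sub hφ.1, HasCompactSupport.of_support_subset_isCompact hK
        ((subset_tsupport _).trans (hsupp k))⟩
    have hconv := hcont (fun k => S k - φ) K hK (fun k => ⟨htest k, hsupp k⟩) (by
      intro m
      rw [Metric.tendstoUniformly_iff]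
      intro δ hδ
      let D : ℝ := ∫ z, ‖ρ z‖
      have hD0 : 0 ≤ D := integral_nonneg fun _ => norm_nonneg _
      obtain ⟨r, hr, Hr⟩ := modulus hφ m (δ := δ / 2 / (D + 1)) (by positivity)
      have l1 : ∀ᶠ k in atTop, e k * R < r := by
        have : Tendsto (fun k => e k * R) atTop (nhds 0) := by simpa using elim.mul_const R
        exact this.eventually_lt_const hr
      have l2 : ∀ᶠ k in atTop, e k * C < δ / 2 := by
        have : Tendsto (fun k => e k * C) atTop (nhds 0) := by simpa using elim.mul_const C
        exact this.eventually_lt_const (by positivity)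
      filter_upwards [l1, l2, eventually_gt_atTop m] with k h1 h2 hm y
      rw [Pi.zero_apply, dist_zero_left]
      rw [iteratedFDeriv_sub_apply ((hSsm k).of_le (by exact_mod_cast le_top)).contDiffAt
        (hφ.1.of_le (by exact_mod_cast le_top)).contDiffAt]
      have b1 := hD k m hm y
      rw [conv_swap hφ (gg_test hρ (epos k))] at b1
      have b2 := mollify_bound hρ hρ1 hR (iteratedFDeriv ℝ m φ)
        (hφ.1.continuous_iteratedFDeriv (by exact_mod_cast le_top)) r _ Hr (epos k) h1 y
      have b3 : δ / 2 / (D + 1) * D ≤ δ / 2 := by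
        rw [div_mul_eq_mul_div, div_le_iff₀ (by positivity)]
        nlinarith
      have b4 := norm_sub_le_norm_sub_add_norm_sub (iteratedFDeriv ℝ m (S k) y)
        (∫ z, gg ρ (e k) z • iteratedFDeriv ℝ m φ (y - z)) (iteratedFDeriv ℝ m φ y)
      calc _ ≤ _ := b4
        _ ≤ e k * C + δ / 2 / (D + 1) * D := add_le_add b1 b2
        _ < δ := by linarith)
    have hS0 : Tendsto (fun k => u (S k)) atTop (nhds 0) := by
      rw [Metric.tendsto_nhds]
      intro δ hδ
      filter_upwards [elim'.eventually (unif (δ / (C + 1)) (by positivity))] with k hk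
      rw [dist_zero_right, Real.norm_eq_abs]
      have hS : S k = ∑ i, c k i • (fun y => gg ρ (e k) (y - x k i)) := by
        ext y
        simp [S]
      rw [hS, map_sum]
      simp only [map_smul, smul_eq_mul]
      calc |∑ i, c k i * u (fun y => gg ρ (e k) (y - x k i))|
          ≤ ∑ i, |c k i * u (fun y => gg ρ (e k) (y - x k i))| := Finset.abs_sum_le_sum_abs _ _
        _ ≤ ∑ i, |c k i| * (δ / (C + 1)) := by
            refine Finset.sum_le_sum fun i _ => ?_
            rw [abs_mul]
            exact mul_le_mul_of_nonneg_left (hk _ (hx k i)).le (abs_nonneg _)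
        _ = (∑ i, |c k i|) * (δ / (C + 1)) := by rw [Finset.sum_mul]
        _ ≤ C * (δ / (C + 1)) := mul_le_mul_of_nonneg_right (hc k) (by positivity)
        _ < δ := by
            rw [← mul_div_assoc, div_lt_iff₀ (by positivity)]
            nlinarith
    have hlim : Tendsto (fun k => u (S k) - u (S k - φ)) atTop (nhds (0 - 0)) := hS0.sub hconv
    simp only [map_sub, sub_sub_cancel, sub_zero] at hlim
    exact tendsto_nhds_unique tendsto_const_nhds hlim
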